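/- Let (T0, T̃0) be a joint pair of abstract Friedrichs operators on a complex Hilbert space H and suppose the subspace V of the graph space W satisfies (V)-boundary conditions. Then there exists a closed subspace W2 ⊆ W⁻ of W such that W = V ∔ W2 (direct sum). Moreover, for any such W2, setting W1 := V ∩ W0^⊥ (Hilbert orthogonal complement in the graph space), one has W = W0 ∔ W1 ∔ W2, and if q0, q1, q2 denote the projections associated with this decomposition, then the operator M := D∘(q1 − q2) ∈ L(W;W') satisfies (M)-boundary conditions and V = ker(D − M). -/

import Mathlib

open scoped InnerProductSpace
open Filter Topology LinearPMap

noncomputable section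

variable {H : Type*} [NormedAddCommGroup H] [InnerProductSpace ℂ H] [CompleteSpace H]

/-- The inner product used in the paper (antilinear in the **second** entry):
`pInner x y = ⟪y, x⟫` in Mathlib's convention. -/
def pInner {H : Type*} [NormedAddCommGroup H] [InnerProductSpace ℂ H] (x y : H) : ℂ :=
  ⟪y, x⟫_ℂ

/-- A pair of densely defined operators with common domain satisfying conditions (T1) and (T2). -/
structure IsDualPairT12 (T0 T0t : H →ₗ.[ℂ] H) (lam : ℝ) : Prop where
  dom_eq : T0.domain = T0t.domain
  dense' : Dense (T0.domain : Set H)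
  sym : ∀ (φ : T0.domain) (ψ : T0t.domain), pInner (T0 φ) (ψ : H) = pInner (φ : H) (T0t ψ)
  lam_pos : 0 < lam
  bound : ∀ (x : H) (hx : x ∈ T0.domain),
    ‖T0 ⟨x, hx⟩ + T0t ⟨x, dom_eq.le hx⟩‖ ≤ 2 * lam * ‖x‖

/-- A joint pair of abstract Friedrichs operators: (T1), (T2) and (T3). -/
structure IsFriedrichsPair (T0 T0t : H →ₗ.[ℂ] H) (lam mu : ℝ)
    extends IsDualPairT12 T0 T0t lam : Prop where
  mu_pos : 0 < mu
  coercive : ∀ (x : H) (hx : x ∈ T0.domain),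
    2 * mu * ‖x‖ ^ 2 ≤ (pInner (T0 ⟨x, hx⟩ + T0t ⟨x, dom_eq.le hx⟩) x).re

/-- The boundary form `[u|v] := ⟨T₁u , v⟩ − ⟨u , T̃₁v⟩` on the graph space
`W := dom T₁ = dom (T̃₀)*`.  The hypothesis `hW` expresses the fact `dom T₁ = dom T̃₁`. -/
def bform (T0 T0t : H →ₗ.[ℂ] H) (hW : T0t.adjoint.domain = T0.adjoint.domain)
    (u v : T0t.adjoint.domain) : ℂ :=
  pInner (T0t.adjoint u) (v : H) - pInner (u : H) (T0.adjoint ⟨(v : H), hW.le v.2⟩)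

/-- `X^[⊥]`, the `[·|·]`-orthogonal complement of `X ⊆ W` in the graph space. -/
def iorth (T0 T0t : H →ₗ.[ℂ] H) (hW : T0t.adjoint.domain = T0.adjoint.domain)
    (X : Set ↥T0t.adjoint.domain) : Set ↥T0t.adjoint.domain :=
  {u | ∀ v ∈ X, bform T0 T0t hW u v = 0}

/-- `W⁺ = {u ∈ W : [u|u] ≥ 0}`. -/
def Wplus (T0 T0t : H →ₗ.[ℂ] H) (hW : T0t.adjoint.domain = T0.adjoint.domain) :
    Set ↥T0t.adjoint.domain :=
  {u | 0 ≤ (bform T0 T0t hW u u).re}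

/-- `W⁻ = {u ∈ W : [u|u] ≤ 0}`. -/
def Wminus (T0 T0t : H →ₗ.[ℂ] H) (hW : T0t.adjoint.domain = T0.adjoint.domain) :
    Set ↥T0t.adjoint.domain :=
  {u | (bform T0 T0t hW u u).re ≤ 0}

/-- (V)-boundary conditions for a subset `V` of the graph space `W`. -/
def VBC (T0 T0t : H →ₗ.[ℂ] H) (hW : T0t.adjoint.domain = T0.adjoint.domain)
    (V : Set ↥T0t.adjoint.domain) : Prop :=
  V ⊆ Wplus T0 T0t hW ∧ iorth T0 T0t hW V ⊆ Wminus T0 T0t hW ∧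
    V = iorth T0 T0t hW (iorth T0 T0t hW V)

/-- The graph norm `‖u‖_{T₁} = ‖u‖ + ‖T₁ u‖` on the graph space. -/
def gnorm (T0t : H →ₗ.[ℂ] H) (u : T0t.adjoint.domain) : ℝ :=
  ‖(u : H)‖ + ‖T0t.adjoint u‖

/-- The distance associated with the graph norm. -/
def gdist (T0t : H →ₗ.[ℂ] H) (u v : T0t.adjoint.domain) : ℝ := gnorm T0t (u - v)

/-- Closedness (sequential) in the graph-norm topology of `W`. -/
def GClosed (T0t : H →ₗ.[ℂ] H) (X : Set ↥T0t.adjoint.domain) : Prop :=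
  ∀ f : ℕ → ↥T0t.adjoint.domain, (∀ n, f n ∈ X) →
    ∀ l, Tendsto (fun n => gdist T0t (f n) l) atTop (𝓝 0) → l ∈ X

/-- `W₀` (the domain of the closure of `T₀`), viewed as a subset of the graph space `W`. -/
def W0set (T0 T0t : H →ₗ.[ℂ] H) : Set ↥T0t.adjoint.domain :=
  {u | (u : H) ∈ T0.closure.domain}

/-- The graph inner product on `W` (in the paper's convention). -/
def gip (T0t : H →ₗ.[ℂ] H) (u v : ↥T0t.adjoint.domain) : ℂ :=
  pInner (u : H) (v : H) + pInner (T0t.adjoint u) (T0t.adjoint v)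

/-- The (Hilbert) orthogonal complement of `W₀` in the graph space. -/
def W0perp (T0 T0t : H →ₗ.[ℂ] H) : Set ↥T0t.adjoint.domain :=
  {u | ∀ v : ↥T0t.adjoint.domain, (v : H) ∈ T0.closure.domain → gip T0t u v = 0}

/-- `ker T₁` as a subset of the graph space. -/
def kerT1set (T0t : H →ₗ.[ℂ] H) : Set ↥T0t.adjoint.domain := {u | T0t.adjoint u = 0}

/-- `ker T̃₁` as a subset of the graph space. -/
def kerT1tset (T0 T0t : H →ₗ.[ℂ] H) (hW : T0t.adjoint.domain = T0.adjoint.domain) :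
    Set ↥T0t.adjoint.domain :=
  {u | T0.adjoint ⟨(u : H), hW.le u.2⟩ = 0}

/-- An operator `M ∈ L(W;W')`, encoded through the pairing `m u v = ⟨Mu, v⟩_{W',W}`
(linear in `u`, antilinear in `v`, and bounded with respect to the graph norm). -/
structure MOp (T0t : H →ₗ.[ℂ] H) where
  m : ↥T0t.adjoint.domain → ↥T0t.adjoint.domain → ℂ
  add_left : ∀ u v w, m (u + v) w = m u w + m v w
  smul_left : ∀ (c : ℂ) (u w), m (c • u) w = c * m u w
  add_right : ∀ u v w, m u (v + w) = m u v + m u w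
  smul_right : ∀ (c : ℂ) (u w), m u (c • w) = starRingEnd ℂ c * m u w
  bounded : ∃ C, ∀ u v, ‖m u v‖ ≤ C * (gnorm T0t u * gnorm T0t v)

/-- The (M)-boundary conditions for a pairing `m u v = ⟨Mu, v⟩_{W',W}`:
(M1) non-negativity and (M2) `W = ker (D − M) + ker (D + M)`. -/
def MBC (T0 T0t : H →ₗ.[ℂ] H) (hW : T0t.adjoint.domain = T0.adjoint.domain)
    (m : ↥T0t.adjoint.domain → ↥T0t.adjoint.domain → ℂ) : Prop :=
  (∀ u, 0 ≤ (m u u).re) ∧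
  (∀ w : ↥T0t.adjoint.domain, ∃ a b : ↥T0t.adjoint.domain,
    (∀ v, bform T0 T0t hW a v = m a v) ∧ (∀ v, bform T0 T0t hW b v + m b v = 0) ∧ w = a + b)

/-- `ker (D − M)` for a pairing `m`. -/
def kerDsubM (T0 T0t : H →ₗ.[ℂ] H) (hW : T0t.adjoint.domain = T0.adjoint.domain)
    (m : ↥T0t.adjoint.domain → ↥T0t.adjoint.domain → ℂ) : Set ↥T0t.adjoint.domain :=
  {u | ∀ v, bform T0 T0t hW u v = m u v}

/-- `ker (D + M)` for a pairing `m`. -/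
def kerDaddM (T0 T0t : H →ₗ.[ℂ] H) (hW : T0t.adjoint.domain = T0.adjoint.domain)
    (m : ↥T0t.adjoint.domain → ↥T0t.adjoint.domain → ℂ) : Set ↥T0t.adjoint.domain :=
  {u | ∀ v, bform T0 T0t hW u v + m u v = 0}

/-!
Adding a constant `c > λ` to both operators changes neither the graph space nor the boundary
form, and makes `T₁ + c` bounded below on `V`. A vector orthogonal to `(T₁ + c) V` lies in
`ker (T̃₁ + c) ∩ V^[⊥]`, which is trivial, so `T₁ + c` maps `V` bijectively onto `H` and
`W₂ = ker (T₁ + c)` is a complement of `V`; it is nonpositive by the same estimate.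
Since `D` vanishes on `W₀`, the operator `M = D(q₁ - q₂)` equals `D(p - q)` with `p`, `q` the
projections of `V ∔ W₂`, whence `D - M = 2Dq` and `D + M = 2Dp`.
-/

section Complement

variable {R M N : Type*} [Ring R] [AddCommGroup M] [Module R M] [AddCommGroup N] [Module R N]
  {p q : Submodule R M}

lemma isCompl_map_equiv_iff (e : M ≃ₗ[R] N) :
    IsCompl (p.map e.toLinearMap) (q.map e.toLinearMap) ↔ IsCompl p q :=
  (Submodule.orderIsoMapComap e).isCompl_iff.symm

lemma projection_add_eq_left (h : IsCompl p q) {a b : M} (ha : a ∈ p) (hb : b ∈ q) :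
    p.projection q h (a + b) = a := by
  rw [_root_.map_add, Submodule.projection_apply_of_mem_left h ha,
    Submodule.projection_apply_of_mem_right h hb, add_zero]

end Complement

section Graph

variable {R E F : Type*} [Ring R] [AddCommGroup E] [Module R E] [AddCommGroup F] [Module R F]

/-- The linear equivalence `u ↦ (u, T u)` of the domain of a partially defined operator with its
graph. It carries the graph-norm topology: a subset of `T.domain` is closed for the graph norm
when its image in the normed space `T.graph` is closed. -/
def graphEquiv (T : E →ₗ.[R] F) : T.domain ≃ₗ[R] T.graph :=
  LinearEquiv.ofBijective ((T.domain.subtype.prod T.toFun).codRestrict T.graph T.mem_graph)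
    ⟨fun _ _ h => Subtype.ext (congrArg Prod.fst (congrArg Subtype.val h)), fun ⟨_, hp⟩ =>
      let ⟨u, h₁, h₂⟩ := T.mem_graph_iff.mp hp
      ⟨u, Subtype.ext (Prod.ext h₁ h₂)⟩⟩

end Graph

section Banach

variable {𝕜 X Y : Type*} [NontriviallyNormedField 𝕜] [NormedAddCommGroup X] [NormedSpace 𝕜 X]
  [CompleteSpace X] [NormedAddCommGroup Y] [NormedSpace 𝕜 Y]

lemma isCompl_ker_of_antilipschitz_of_dense (f : X →L[𝕜] Y) {p : Submodule 𝕜 X}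
    (hp : IsClosed (p : Set X)) {K : NNReal} (hK : ∀ x ∈ p, ‖x‖ ≤ K * ‖f x‖)
    (hd : Dense (p.map f.toLinearMap : Set Y)) : IsCompl p f.ker := by
  have : CompleteSpace p := hp.completeSpace_coe
  have hrange : Set.range (f ∘L p.subtypeL) = p.map f.toLinearMap := by
    ext y; simp
  have hclosed : IsClosed (p.map f.toLinearMap : Set Y) :=
    hrange ▸ (ContinuousLinearMap.antilipschitz_of_bound (f ∘L p.subtypeL)
      fun x => hK x x.2).isClosed_range (f ∘L p.subtypeL).uniformContinuous
  have hmap : p.map f.toLinearMap = ⊤ :=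
    SetLike.coe_injective (hclosed.closure_eq.symm.trans hd.closure_eq)
  refine IsCompl.of_eq ((Submodule.eq_bot_iff _).mpr fun x hx => ?_) ?_
  · have hfx : f x = 0 := hx.2
    simpa [hfx] using hK x hx.1
  · exact (LinearMap.map_eq_top_iff
      (top_le_iff.mp (hmap.ge.trans LinearMap.map_le_range))).mp hmap

lemma exists_norm_projection_le {M : Type*} [AddCommGroup M] [Module 𝕜 M] (e : M ≃ₗ[𝕜] X)
    {p q : Submodule 𝕜 M} (h : IsCompl p q) (hp : IsClosed (p.map e.toLinearMap : Set X))
    (hq : IsClosed (q.map e.toLinearMap : Set X)) :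
    ∃ C, 0 ≤ C ∧ ∀ u, ‖e (p.projection q h u)‖ ≤ C * ‖e u‖ := by
  have hX := Submodule.IsCompl.isTopCompl_of_isClosed ((isCompl_map_equiv_iff e).mpr h) hp hq
  refine ⟨‖Submodule.projectionL _ _ hX‖, norm_nonneg _, fun u => ?_⟩
  have hproj : Submodule.projectionL _ _ hX (e u) = e (p.projection q h u) := by
    rw [Submodule.projectionL_apply]
    nth_rw 1 [← Submodule.projection_add_projection_eq_self h u]
    rw [_root_.map_add]
    exact projection_add_eq_left _ (Submodule.mem_map_of_mem (Submodule.projection_apply_mem h u))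
      (Submodule.mem_map_of_mem (Submodule.projection_apply_mem h.symm u))
  exact hproj ▸ (Submodule.projectionL _ _ hX).le_opNorm (e u)

end Banach

section ShiftedOperator

variable {𝕜 E : Type*} [NontriviallyNormedField 𝕜] [NormedAddCommGroup E] [NormedSpace 𝕜 E]

/-- The operator `T + c` on the domain of `T`. -/
def addSMul (T : E →ₗ.[𝕜] E) (c : 𝕜) : T.domain →ₗ[𝕜] E :=
  T.toFun + c • T.domain.subtype

lemma addSMul_apply (T : E →ₗ.[𝕜] E) (c : 𝕜) (u : T.domain) :
    addSMul T c u = T u + c • (u : E) := rfl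

/-- The operator `T + c` transported to the graph of `T`, where it is bounded. -/
def graphAddSMul (T : E →ₗ.[𝕜] E) (c : 𝕜) : T.graph →L[𝕜] E :=
  (ContinuousLinearMap.snd 𝕜 E E + c • ContinuousLinearMap.fst 𝕜 E E) ∘L T.graph.subtypeL

lemma map_ker_addSMul (T : E →ₗ.[𝕜] E) (c : 𝕜) :
    (addSMul T c).ker.map (graphEquiv T).toLinearMap = (graphAddSMul T c).ker :=
  Submodule.map_comap_eq_of_surjective (graphEquiv T).surjective (graphAddSMul T c).ker

lemma norm_graphEquiv_le_norm_addSMul (T : E →ₗ.[𝕜] E) (c : 𝕜) {m : ℝ} (hm : 0 < m) {u : T.domain}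
    (hu : m * ‖(u : E)‖ ≤ ‖addSMul T c u‖) :
    ‖graphEquiv T u‖ ≤ (1 + (1 + ‖c‖) / m) * ‖addSMul T c u‖ := by
  have hfst : ‖(u : E)‖ ≤ ‖addSMul T c u‖ / m := by rwa [le_div_iff₀' hm]
  have hsnd : ‖T u‖ ≤ ‖addSMul T c u‖ + ‖c‖ * ‖(u : E)‖ := by
    simpa [addSMul_apply, norm_smul] using norm_sub_le (addSMul T c u) (c • (u : E))
  have hgraph : ‖graphEquiv T u‖ ≤ ‖(u : E)‖ + ‖T u‖ :=
    max_le_add_of_nonneg (norm_nonneg _) (norm_nonneg _)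
  calc ‖graphEquiv T u‖
      ≤ ‖addSMul T c u‖ + (1 + ‖c‖) * ‖(u : E)‖ := by linarith
    _ ≤ ‖addSMul T c u‖ + (1 + ‖c‖) * (‖addSMul T c u‖ / m) := by gcongr
    _ = (1 + (1 + ‖c‖) / m) * ‖addSMul T c u‖ := by ring

lemma isCompl_ker_addSMul_of_dense [CompleteSpace E] {T : E →ₗ.[𝕜] E} (hT : T.IsClosed) {c : 𝕜}
    {V : Submodule 𝕜 T.domain}
    (hV : IsClosed (V.map (graphEquiv T).toLinearMap : Set T.graph)) {m : ℝ} (hm : 0 < m)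
    (hbelow : ∀ u ∈ V, m * ‖(u : E)‖ ≤ ‖addSMul T c u‖)
    (hd : Dense (V.map (addSMul T c) : Set E)) : IsCompl V (addSMul T c).ker := by
  have : CompleteSpace T.graph := IsClosed.completeSpace_coe (hs := hT)
  rw [← isCompl_map_equiv_iff (graphEquiv T), map_ker_addSMul]
  refine isCompl_ker_of_antilipschitz_of_dense _ hV
    (K := ⟨1 + (1 + ‖c‖) / m, by positivity⟩) ?_ ?_
  · rintro _ ⟨u, hu, rfl⟩
    exact norm_graphEquiv_le_norm_addSMul T c hm (hbelow u hu)
  · rwa [← Submodule.map_comp]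

end ShiftedOperator

section FormalAdjoint

variable {𝕜 E F : Type*} [RCLike 𝕜] [NormedAddCommGroup E] [InnerProductSpace 𝕜 E]
  [NormedAddCommGroup F] [InnerProductSpace 𝕜 F]

lemma isFormalAdjoint_closure_right {T : E →ₗ.[𝕜] F} {S : F →ₗ.[𝕜] E} (h : T.IsFormalAdjoint S)
    (hS : S.IsClosable) : T.IsFormalAdjoint S.closure := by
  intro x y
  have hclosed : IsClosed {p : F × E | ⟪T x, p.1⟫_𝕜 = ⟪(x : E), p.2⟫_𝕜} :=
    isClosed_eq (by fun_prop) (by fun_prop)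
  have hgraph : (S.graph : Set (F × E)) ⊆ {p | ⟪T x, p.1⟫_𝕜 = ⟪(x : E), p.2⟫_𝕜} := by
    intro p hp
    obtain ⟨z, h₁, h₂⟩ := S.mem_graph_iff.mp hp
    simpa [← h₁, ← h₂] using h x z
  have hy : ((y : F), S.closure y) ∈ S.graph.topologicalClosure :=
    hS.graph_closure_eq_closure_graph ▸ S.closure.mem_graph y
  exact closure_minimal hgraph hclosed hy

lemma exists_inner_sub_add_inner_sub_eq_zero [CompleteSpace E] [CompleteSpace F]
    {S : E →ₗ.[𝕜] F} (hS : S.IsClosed) (p : E × F) :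
    ∃ x : S.domain, ∀ y : S.domain, ⟪(y : E), p.1 - x⟫_𝕜 + ⟪S y, p.2 - S x⟫_𝕜 = 0 := by
  let e := WithLp.prodContinuousLinearEquiv 2 𝕜 E F
  let K : Submodule 𝕜 (WithLp 2 (E × F)) := S.graph.comap e.toLinearEquiv.toLinearMap
  have : CompleteSpace K :=
    (IsClosed.preimage e.continuous hS : IsClosed (K : Set (WithLp 2 (E × F)))).completeSpace_coe
  obtain ⟨x, h₁, h₂⟩ := S.mem_graph_iff.mp (K.starProjection_apply_mem (e.symm p))
  refine ⟨x, fun y => ?_⟩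
  have horth := K.sub_starProjection_mem_orthogonal (e.symm p) (e.symm (y, S y)) (S.mem_graph y)
  rw [WithLp.prod_inner_apply] at horth
  rw [h₁, h₂]
  exact horth

end FormalAdjoint

namespace IsDualPairT12

variable {T0 T0t : H →ₗ.[ℂ] H} {lam : ℝ}

omit [CompleteSpace H] in
lemma isFormalAdjoint (hT : IsDualPairT12 T0 T0t lam) : T0t.IsFormalAdjoint T0 :=
  fun ψ φ => (hT.sym φ ψ).symm

omit [CompleteSpace H] in
lemma dense_domain (hT : IsDualPairT12 T0 T0t lam) : Dense (T0t.domain : Set H) :=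
  hT.dom_eq ▸ hT.dense'

lemma isClosable (hT : IsDualPairT12 T0 T0t lam) : T0.IsClosable :=
  (adjoint_isClosed hT.dense_domain).isClosable.leIsClosable
    (hT.isFormalAdjoint.le_adjoint hT.dense_domain)

lemma closure_le_adjoint (hT : IsDualPairT12 T0 T0t lam) : T0.closure ≤ T0t.adjoint :=
  (isFormalAdjoint_closure_right hT.isFormalAdjoint hT.isClosable).le_adjoint hT.dense_domain

/-- The sum `T₀ + T̃₀` on the common domain. -/
def domainSum (hT : IsDualPairT12 T0 T0t lam) : T0.domain →ₗ[ℂ] H :=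
  T0.toFun + T0t.toFun ∘ₗ Submodule.inclusion hT.dom_eq.le

omit [CompleteSpace H] in
lemma norm_domainSum_le (hT : IsDualPairT12 T0 T0t lam) (x : T0.domain) :
    ‖hT.domainSum x‖ ≤ 2 * lam * ‖T0.domain.subtype x‖ :=
  hT.bound x x.2

/-- The bounded operator on `H` extending `T₀ + T̃₀`; on the graph space it is `T₁ + T̃₁`. -/
def sum (hT : IsDualPairT12 T0 T0t lam) : H →L[ℂ] H :=
  hT.domainSum.extendOfNorm T0.domain.subtype

lemma sum_apply (hT : IsDualPairT12 T0 T0t lam) (x : T0.domain) :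
    hT.sum x = T0 x + T0t (Submodule.inclusion hT.dom_eq.le x) :=
  LinearMap.extendOfNorm_eq hT.dense'.denseRange_val ⟨_, hT.norm_domainSum_le⟩ x

lemma norm_sum_le (hT : IsDualPairT12 T0 T0t lam) (u : H) : ‖hT.sum u‖ ≤ 2 * lam * ‖u‖ :=
  LinearMap.norm_extendOfNorm_apply_le hT.dense'.denseRange_val _ hT.norm_domainSum_le u

lemma sum_isSymmetric (hT : IsDualPairT12 T0 T0t lam) (u v : H) :
    ⟪hT.sum u, v⟫_ℂ = ⟪u, hT.sum v⟫_ℂ := by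
  refine hT.dense'.denseRange_val.induction_on₂ (isClosed_eq (by fun_prop) (by fun_prop))
    (fun x y => ?_) u v
  have hxy : ⟪T0 x, (y : H)⟫_ℂ = ⟪(x : H), T0t (Submodule.inclusion hT.dom_eq.le y)⟫_ℂ := by
    simpa [pInner] using congrArg (starRingEnd ℂ) (hT.sym x (Submodule.inclusion hT.dom_eq.le y))
  have hyx : ⟪T0t (Submodule.inclusion hT.dom_eq.le x), (y : H)⟫_ℂ = ⟪(x : H), T0 y⟫_ℂ :=
    hT.isFormalAdjoint (Submodule.inclusion hT.dom_eq.le x) y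
  rw [hT.sum_apply, hT.sum_apply, inner_add_left, inner_add_right, hxy, hyx, add_comm]

variable (hW : T0t.adjoint.domain = T0.adjoint.domain)

lemma adjoint_apply_eq_sum_sub (hT : IsDualPairT12 T0 T0t lam) (u : T0t.adjoint.domain) :
    T0.adjoint ⟨u, hW.le u.2⟩ = hT.sum u - T0t.adjoint u := by
  refine adjoint_apply_eq hT.dense' _ fun x => ?_
  have hx : ⟪T0t.adjoint u, (x : H)⟫_ℂ = ⟪(u : H), T0t (Submodule.inclusion hT.dom_eq.le x)⟫_ℂ :=
    adjoint_isFormalAdjoint hT.dense_domain u (Submodule.inclusion hT.dom_eq.le x)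
  rw [inner_sub_left, hT.sum_isSymmetric, hT.sum_apply, inner_add_right, hx,
    add_sub_cancel_right]

lemma bform_eq (hT : IsDualPairT12 T0 T0t lam) (u v : T0t.adjoint.domain) :
    bform T0 T0t hW u v =
      ⟪(v : H), T0t.adjoint u⟫_ℂ + ⟪T0t.adjoint v, (u : H)⟫_ℂ - ⟪(v : H), hT.sum u⟫_ℂ := by
  rw [bform, hT.adjoint_apply_eq_sum_sub hW, pInner, pInner, inner_sub_left, hT.sum_isSymmetric]
  ring

lemma conj_bform (hT : IsDualPairT12 T0 T0t lam) (u v : T0t.adjoint.domain) :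
    starRingEnd ℂ (bform T0 T0t hW u v) = bform T0 T0t hW v u := by
  simp only [hT.bform_eq hW, _root_.map_sub, _root_.map_add, inner_conj_symm,
    hT.sum_isSymmetric]
  ring

lemma bform_eq_zero_comm (hT : IsDualPairT12 T0 T0t lam) {u v : T0t.adjoint.domain} :
    bform T0 T0t hW u v = 0 ↔ bform T0 T0t hW v u = 0 := by
  rw [← hT.conj_bform hW, map_eq_zero]

lemma norm_bform_le (hT : IsDualPairT12 T0 T0t lam) (u v : T0t.adjoint.domain) :
    ‖bform T0 T0t hW u v‖ ≤ (1 + 2 * lam) * (gnorm T0t u * gnorm T0t v) := by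
  have h₁ := norm_inner_le_norm (𝕜 := ℂ) (v : H) (T0t.adjoint u)
  have h₂ := norm_inner_le_norm (𝕜 := ℂ) (T0t.adjoint v) (u : H)
  have h₃ : ‖⟪(v : H), hT.sum u⟫_ℂ‖ ≤ ‖(v : H)‖ * (2 * lam * ‖(u : H)‖) :=
    (norm_inner_le_norm _ _).trans (by gcongr; exact hT.norm_sum_le u)
  have hlam := hT.lam_pos
  rw [hT.bform_eq hW]
  calc _ ≤ ‖(v : H)‖ * ‖T0t.adjoint u‖ + ‖T0t.adjoint v‖ * ‖(u : H)‖
          + ‖(v : H)‖ * (2 * lam * ‖(u : H)‖) :=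
        (norm_sub_le _ _).trans (add_le_add ((norm_add_le _ _).trans (add_le_add h₁ h₂)) h₃)
    _ ≤ _ := by
      unfold gnorm
      have : 0 ≤ ‖(v : H)‖ * ‖(u : H)‖ + ‖T0t.adjoint v‖ * ‖T0t.adjoint u‖
        + 2 * lam * (‖(v : H)‖ * ‖T0t.adjoint u‖ + ‖T0t.adjoint v‖ * ‖(u : H)‖
          + ‖T0t.adjoint v‖ * ‖T0t.adjoint u‖) := by positivity
      linarith

lemma re_bform_add_le (hT : IsDualPairT12 T0 T0t lam) (c : ℝ) (u : T0t.adjoint.domain) :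
    (bform T0 T0t hW u u).re + 2 * (c - lam) * ‖(u : H)‖ ^ 2 ≤
      2 * (⟪(u : H), addSMul T0t.adjoint (c : ℂ) u⟫_ℂ).re := by
  have hsum : |(⟪(u : H), hT.sum u⟫_ℂ).re| ≤ 2 * lam * ‖(u : H)‖ ^ 2 :=
    calc |(⟪(u : H), hT.sum u⟫_ℂ).re|
        ≤ ‖(u : H)‖ * ‖hT.sum u‖ := (Complex.abs_re_le_norm _).trans (norm_inner_le_norm _ _)
      _ ≤ ‖(u : H)‖ * (2 * lam * ‖(u : H)‖) := by gcongr; exact hT.norm_sum_le u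
      _ = 2 * lam * ‖(u : H)‖ ^ 2 := by ring
  have hsymm : (⟪T0t.adjoint u, (u : H)⟫_ℂ).re = (⟪(u : H), T0t.adjoint u⟫_ℂ).re :=
    inner_re_symm (𝕜 := ℂ) _ _
  have hself : (⟪(u : H), (u : H)⟫_ℂ).re = ‖(u : H)‖ ^ 2 := inner_self_eq_norm_sq (𝕜 := ℂ) _
  have hshift : (⟪(u : H), addSMul T0t.adjoint (c : ℂ) u⟫_ℂ).re =
      (⟪(u : H), T0t.adjoint u⟫_ℂ).re + c * ‖(u : H)‖ ^ 2 := by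
    rw [addSMul_apply, inner_add_right, inner_smul_right, Complex.add_re, Complex.re_ofReal_mul,
      hself]
  rw [hT.bform_eq hW, Complex.sub_re, Complex.add_re, hsymm, hshift]
  linarith [neg_le_of_abs_le hsum]

lemma bform_eq_zero_of_mem_W0set (hT : IsDualPairT12 T0 T0t lam) {u : T0t.adjoint.domain}
    (hu : u ∈ W0set T0 T0t) (v : T0t.adjoint.domain) : bform T0 T0t hW u v = 0 := by
  have hu' : T0.closure ⟨u, hu⟩ = T0t.adjoint u := hT.closure_le_adjoint.2 rfl
  have h := isFormalAdjoint_closure_right (adjoint_isFormalAdjoint hT.dense') hT.isClosable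
    ⟨v, hW.le v.2⟩ ⟨u, hu⟩
  rw [hu'] at h
  exact sub_eq_zero.mpr h.symm

lemma exists_sub_mem_W0perp (hT : IsDualPairT12 T0 T0t lam) (w : T0t.adjoint.domain) :
    ∃ a ∈ W0set T0 T0t, w - a ∈ W0perp T0 T0t := by
  obtain ⟨x, hx⟩ := exists_inner_sub_add_inner_sub_eq_zero hT.isClosable.closure_isClosed
    ((w : H), T0t.adjoint w)
  have hle := hT.closure_le_adjoint
  refine ⟨⟨x, hle.1 x.2⟩, x.2, fun v hv => ?_⟩
  have hxv := hx ⟨v, hv⟩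
  rw [hle.2 (y := v) rfl, hle.2 (y := ⟨x, hle.1 x.2⟩) rfl] at hxv
  simpa only [gip, pInner, LinearPMap.map_sub, Submodule.coe_sub] using hxv

lemma exists_bform_eq_inner (hT : IsDualPairT12 T0 T0t lam) {c : ℂ} {h : H}
    (hh : ∀ u ∈ W0set T0 T0t, ⟪h, addSMul T0t.adjoint c u⟫_ℂ = 0) :
    ∃ w : T0t.adjoint.domain, (w : H) = h ∧
      ∀ u, bform T0 T0t hW u w = ⟪h, addSMul T0t.adjoint c u⟫_ℂ := by
  have hadj : ∀ x : T0.domain, ⟪-(starRingEnd ℂ c • h), (x : H)⟫_ℂ = ⟪h, T0 x⟫_ℂ := by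
    intro x
    have hle := hT.isFormalAdjoint.le_adjoint hT.dense_domain
    have hx := hh ⟨x, hle.1 x.2⟩ (T0.le_closure.1 x.2)
    rw [addSMul_apply, ← hle.2 (x := x) rfl, inner_add_right, inner_smul_right] at hx
    rw [inner_neg_left, inner_smul_left, Complex.conj_conj]
    exact (eq_neg_of_add_eq_zero_left hx).symm
  have hdom : h ∈ T0.adjoint.domain := mem_adjoint_domain_of_exists h ⟨_, hadj⟩
  refine ⟨⟨h, hW.ge hdom⟩, rfl, fun u => ?_⟩
  have happly : T0.adjoint ⟨h, hdom⟩ = -(starRingEnd ℂ c • h) :=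
    adjoint_apply_eq hT.dense' _ hadj
  simp only [bform, pInner, addSMul_apply, happly, inner_neg_left, inner_smul_left,
    Complex.conj_conj, inner_add_right, inner_smul_right, sub_neg_eq_add]

end IsDualPairT12

section GraphSpace

variable (T0 T0t : H →ₗ.[ℂ] H)

lemma norm_graphEquiv_le_gnorm (u : T0t.adjoint.domain) :
    ‖graphEquiv T0t.adjoint u‖ ≤ gnorm T0t u :=
  max_le_add_of_nonneg (norm_nonneg _) (norm_nonneg _)

lemma gnorm_le_two_mul_norm_graphEquiv (u : T0t.adjoint.domain) :
    gnorm T0t u ≤ 2 * ‖graphEquiv T0t.adjoint u‖ :=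
  (add_le_add (le_max_left _ _) (le_max_right _ _)).trans_eq (two_mul _).symm

lemma tendsto_gdist_iff {f : ℕ → T0t.adjoint.domain} {l : T0t.adjoint.domain} :
    Tendsto (fun n => gdist T0t (f n) l) atTop (𝓝 0) ↔
      Tendsto (fun n => graphEquiv T0t.adjoint (f n)) atTop (𝓝 (graphEquiv T0t.adjoint l)) := by
  have hsub (n : ℕ) : graphEquiv T0t.adjoint (f n) - graphEquiv T0t.adjoint l =
      graphEquiv T0t.adjoint (f n - l) := (_root_.map_sub _ _ _).symm
  rw [tendsto_iff_norm_sub_tendsto_zero (b := graphEquiv T0t.adjoint l)]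
  simp only [hsub]
  constructor <;> intro h
  · exact squeeze_zero (fun _ => norm_nonneg _) (fun n => norm_graphEquiv_le_gnorm _ _) h
  · exact squeeze_zero (fun _ => by unfold gdist gnorm; positivity)
      (fun n => gnorm_le_two_mul_norm_graphEquiv _ _) (by simpa using h.const_mul 2)

lemma gClosed_iff_isClosed_image {X : Set T0t.adjoint.domain} :
    GClosed T0t X ↔ IsClosed (graphEquiv T0t.adjoint '' X) := by
  rw [← isSeqClosed_iff_isClosed]
  constructor
  · intro hX x y hx hy
    choose f hf hfx using hx
    obtain ⟨l, rfl⟩ := (graphEquiv T0t.adjoint).surjective y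
    exact ⟨l, hX f hf l ((tendsto_gdist_iff T0t).mpr (by simpa only [hfx] using hy)), rfl⟩
  · intro hX f hf l hl
    exact (graphEquiv T0t.adjoint).injective.mem_set_image.mp
      (hX (fun n => Set.mem_image_of_mem _ (hf n)) ((tendsto_gdist_iff T0t).mp hl))

variable {T0 T0t}

lemma eq_zero_of_mem_W0set_of_mem_W0perp {u : T0t.adjoint.domain} (h₀ : u ∈ W0set T0 T0t)
    (hperp : u ∈ W0perp T0 T0t) : u = 0 := by
  have hre : (⟪(u : H), (u : H)⟫_ℂ).re + (⟪T0t.adjoint u, T0t.adjoint u⟫_ℂ).re = 0 :=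
    congrArg Complex.re (hperp u h₀)
  have hTu : 0 ≤ (⟪T0t.adjoint u, T0t.adjoint u⟫_ℂ).re := inner_self_nonneg (𝕜 := ℂ)
  have hu : (⟪(u : H), (u : H)⟫_ℂ).re ≤ 0 := by linarith
  exact Subtype.ext ((re_inner_self_nonpos (𝕜 := ℂ)).mp hu)

variable (hW : T0t.adjoint.domain = T0.adjoint.domain)

/-- The boundary form `[·|v]` as a linear functional of its first entry. -/
def bformLeft (v : T0t.adjoint.domain) : T0t.adjoint.domain →ₗ[ℂ] ℂ :=
  (innerₛₗ ℂ (v : H)) ∘ₗ T0t.adjoint.toFun -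
    (innerₛₗ ℂ (T0.adjoint ⟨v, hW.le v.2⟩)) ∘ₗ T0t.adjoint.domain.subtype

lemma bform_add_left (u u' v : T0t.adjoint.domain) :
    bform T0 T0t hW (u + u') v = bform T0 T0t hW u v + bform T0 T0t hW u' v :=
  _root_.map_add (bformLeft hW v) u u'

lemma bform_sub_left (u u' v : T0t.adjoint.domain) :
    bform T0 T0t hW (u - u') v = bform T0 T0t hW u v - bform T0 T0t hW u' v :=
  _root_.map_sub (bformLeft hW v) u u'

lemma bform_zero_left (v : T0t.adjoint.domain) : bform T0 T0t hW 0 v = 0 :=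
  _root_.map_zero (bformLeft hW v)

end GraphSpace

namespace IsDualPairT12

variable {T0 T0t : H →ₗ.[ℂ] H} {lam : ℝ} (hW : T0t.adjoint.domain = T0.adjoint.domain)

lemma re_bform_sub_add (hT : IsDualPairT12 T0 T0t lam) (a b : T0t.adjoint.domain) :
    (bform T0 T0t hW (a - b) (a + b)).re =
      (bform T0 T0t hW a a).re - (bform T0 T0t hW b b).re := by
  have hcross : (bform T0 T0t hW b a).re = (bform T0 T0t hW a b).re := by
    rw [← hT.conj_bform hW, Complex.conj_re]
  have hright (u : T0t.adjoint.domain) :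
      bform T0 T0t hW u (a + b) = bform T0 T0t hW u a + bform T0 T0t hW u b := by
    simp only [← hT.conj_bform hW _ u, bform_add_left, _root_.map_add]
  rw [bform_sub_left, hright, hright, Complex.sub_re, Complex.add_re, Complex.add_re, hcross]
  ring

lemma gClosed_iorth (hT : IsDualPairT12 T0 T0t lam) (X : Set T0t.adjoint.domain) :
    GClosed T0t (iorth T0 T0t hW X) := by
  intro f hf l hl v hv
  have hbound (n : ℕ) :
      ‖bform T0 T0t hW l v‖ ≤ (1 + 2 * lam) * (gdist T0t (f n) l * gnorm T0t v) := by
    have h := hT.norm_bform_le hW (f n - l) v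
    rwa [bform_sub_left, hf n v hv, zero_sub, norm_neg] at h
  exact norm_le_zero_iff.mp
    (ge_of_tendsto' (by simpa using (hl.mul_const (gnorm T0t v)).const_mul (1 + 2 * lam)) hbound)

lemma mul_norm_le_norm_addSMul (hT : IsDualPairT12 T0 T0t lam) (c : ℝ)
    {u : T0t.adjoint.domain} (hu : u ∈ Wplus T0 T0t hW) :
    (c - lam) * ‖(u : H)‖ ≤ ‖addSMul T0t.adjoint (c : ℂ) u‖ := by
  have hpos : 0 ≤ (bform T0 T0t hW u u).re := hu
  have hre : (⟪(u : H), addSMul T0t.adjoint (c : ℂ) u⟫_ℂ).re ≤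
      ‖(u : H)‖ * ‖addSMul T0t.adjoint (c : ℂ) u‖ := re_inner_le_norm (𝕜 := ℂ) _ _
  have h := hT.re_bform_add_le hW c u
  rcases (norm_nonneg (u : H)).eq_or_lt with h₀ | h₀
  · simp [← h₀]
  · exact le_of_mul_le_mul_left (by linarith) h₀

lemma ker_addSMul_subset_Wminus (hT : IsDualPairT12 T0 T0t lam) {c : ℝ} (hc : lam ≤ c) :
    ((addSMul T0t.adjoint (c : ℂ)).ker : Set _) ⊆ Wminus T0 T0t hW := by
  intro u hu
  have h := hT.re_bform_add_le hW c u
  rw [LinearMap.mem_ker.mp hu, inner_zero_right, Complex.zero_re, mul_zero] at h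
  have hshift : 0 ≤ 2 * (c - lam) * ‖(u : H)‖ ^ 2 := by
    have := sub_nonneg.mpr hc
    positivity
  exact (by linarith : (bform T0 T0t hW u u).re ≤ 0)

end IsDualPairT12

lemma gClosed_ker_addSMul (T0t : H →ₗ.[ℂ] H) (c : ℂ) :
    GClosed T0t ((addSMul T0t.adjoint c).ker : Set _) := by
  have hclosed := (graphAddSMul T0t.adjoint c).isClosed_ker
  rw [← map_ker_addSMul] at hclosed
  exact (gClosed_iff_isClosed_image T0t).mpr hclosed

namespace VBC

variable {T0 T0t : H →ₗ.[ℂ] H} {lam : ℝ} {hW : T0t.adjoint.domain = T0.adjoint.domain}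

lemma mem_of_bform_eq_zero {V : Set T0t.adjoint.domain} (hV : VBC T0 T0t hW V)
    {u : T0t.adjoint.domain} (hu : ∀ v, bform T0 T0t hW u v = 0) : u ∈ V :=
  hV.2.2.ge fun v _ => hu v

lemma gClosed {V : Set T0t.adjoint.domain} (hV : VBC T0 T0t hW V)
    (hT : IsDualPairT12 T0 T0t lam) : GClosed T0t V :=
  hV.2.2 ▸ hT.gClosed_iorth hW _

lemma W0set_subset {V : Set T0t.adjoint.domain} (hV : VBC T0 T0t hW V)
    (hT : IsDualPairT12 T0 T0t lam) : W0set T0 T0t ⊆ V :=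
  fun _ hu => hV.mem_of_bform_eq_zero (hT.bform_eq_zero_of_mem_W0set hW hu)

lemma dense_map_addSMul {V : Submodule ℂ T0t.adjoint.domain}
    (hV : VBC T0 T0t hW (V : Set _)) (hT : IsDualPairT12 T0 T0t lam) {c : ℝ} (hc : lam < c) :
    Dense (V.map (addSMul T0t.adjoint (c : ℂ)) : Set H) := by
  rw [Submodule.dense_iff_topologicalClosure_eq_top, Submodule.topologicalClosure_eq_top_iff,
    Submodule.eq_bot_iff]
  intro h hh
  have hV0 : ∀ u ∈ V, ⟪h, addSMul T0t.adjoint (c : ℂ) u⟫_ℂ = 0 := fun u hu =>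
    Submodule.inner_left_of_mem_orthogonal (Submodule.mem_map_of_mem hu) hh
  obtain ⟨w, rfl, hw⟩ := hT.exists_bform_eq_inner hW fun u hu => hV0 u (hV.W0set_subset hT hu)
  have hwV : w ∈ iorth T0 T0t hW V := fun u hu => by
    rw [hT.bform_eq_zero_comm hW, hw, hV0 u hu]
  have hneg : (bform T0 T0t hW w w).re ≤ 0 := hV.2.1 hwV
  have hle := hT.re_bform_add_le hW c w
  rw [← hw] at hle
  have hnorm : ‖(w : H)‖ ^ 2 ≤ 0 := by nlinarith
  simpa using hnorm.antisymm (sq_nonneg _)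

lemma isCompl_ker_addSMul {V : Submodule ℂ T0t.adjoint.domain}
    (hV : VBC T0 T0t hW (V : Set _)) (hT : IsDualPairT12 T0 T0t lam) {c : ℝ} (hc : lam < c) :
    IsCompl V (addSMul T0t.adjoint (c : ℂ)).ker := by
  have hclosed : IsClosed (V.map (graphEquiv T0t.adjoint).toLinearMap : Set T0t.adjoint.graph) :=
    (gClosed_iff_isClosed_image T0t).mp (hV.gClosed hT)
  have hbelow : ∀ u ∈ V, (c - lam) * ‖(u : H)‖ ≤ ‖addSMul T0t.adjoint (c : ℂ) u‖ :=
    fun _ hu => hT.mul_norm_le_norm_addSMul hW c (hV.1 hu)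
  have hdense := hV.dense_map_addSMul hT hc
  have hadjoint := adjoint_isClosed hT.dense_domain
  exact isCompl_ker_addSMul_of_dense hadjoint hclosed (sub_pos.mpr hc) hbelow hdense

end VBC

section ProjectionPairing

variable {T0 T0t : H →ₗ.[ℂ] H} {lam : ℝ} (hW : T0t.adjoint.domain = T0.adjoint.domain)
  {V W2 : Submodule ℂ T0t.adjoint.domain} (h : IsCompl V W2)

/-- The pairing `(u, v) ↦ ⟨Mu, v⟩` of the operator `M = D(p - q)`, where `p` and `q` are the
projections of the graph space onto `V` and `W₂` along the decomposition `V ∔ W₂`. -/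
def projForm (u v : T0t.adjoint.domain) : ℂ :=
  bform T0 T0t hW (V.projection W2 h u - W2.projection V h.symm u) v

lemma bform_sub_projForm (u v : T0t.adjoint.domain) :
    bform T0 T0t hW u v - projForm hW h u v =
      2 * bform T0 T0t hW (W2.projection V h.symm u) v := by
  nth_rw 1 [← Submodule.projection_add_projection_eq_self h u]
  rw [projForm, bform_add_left, bform_sub_left]
  ring

lemma bform_add_projForm (u v : T0t.adjoint.domain) :
    bform T0 T0t hW u v + projForm hW h u v = 2 * bform T0 T0t hW (V.projection W2 h u) v := by
  nth_rw 1 [← Submodule.projection_add_projection_eq_self h u]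
  rw [projForm, bform_add_left, bform_sub_left]
  ring

lemma coe_subset_kerDsubM_projForm : (V : Set _) ⊆ kerDsubM T0 T0t hW (projForm hW h) := by
  intro u hu v
  rw [← sub_eq_zero, bform_sub_projForm, Submodule.projection_apply_of_mem_right h.symm hu,
    bform_zero_left, mul_zero]

lemma coe_subset_kerDaddM_projForm : (W2 : Set _) ⊆ kerDaddM T0 T0t hW (projForm hW h) := by
  intro u hu v
  rw [bform_add_projForm, Submodule.projection_apply_of_mem_right h hu, bform_zero_left, mul_zero]

lemma exists_gnorm_projection_le (hdense : Dense (T0t.domain : Set H))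
    (hV : GClosed T0t (V : Set _)) (hW2 : GClosed T0t (W2 : Set _)) :
    ∃ C, ∀ u, gnorm T0t (V.projection W2 h u) ≤ C * gnorm T0t u := by
  have : CompleteSpace T0t.adjoint.graph :=
    IsClosed.completeSpace_coe (hs := adjoint_isClosed hdense)
  obtain ⟨C, hC₀, hC⟩ := exists_norm_projection_le (graphEquiv T0t.adjoint) h
    ((gClosed_iff_isClosed_image T0t).mp hV) ((gClosed_iff_isClosed_image T0t).mp hW2)
  refine ⟨2 * C, fun u => ?_⟩
  calc gnorm T0t (V.projection W2 h u)
      ≤ 2 * ‖graphEquiv T0t.adjoint (V.projection W2 h u)‖ := gnorm_le_two_mul_norm_graphEquiv _ _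
    _ ≤ 2 * (C * gnorm T0t u) := by
      have hu := norm_graphEquiv_le_gnorm T0t u
      grw [hC u, hu]
    _ = 2 * C * gnorm T0t u := (mul_assoc _ _ _).symm

lemma IsDualPairT12.exists_norm_projForm_le (hT : IsDualPairT12 T0 T0t lam)
    (hV : GClosed T0t (V : Set _)) (hW2 : GClosed T0t (W2 : Set _)) :
    ∃ C, ∀ u v, ‖projForm hW h u v‖ ≤ C * (gnorm T0t u * gnorm T0t v) := by
  obtain ⟨C, hC⟩ := exists_gnorm_projection_le h hT.dense_domain hV hW2
  obtain ⟨C', hC'⟩ := exists_gnorm_projection_le h.symm hT.dense_domain hW2 hV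
  refine ⟨(1 + 2 * lam) * (C + C'), fun u v => ?_⟩
  have hlam := hT.lam_pos
  have hv : 0 ≤ gnorm T0t v := add_nonneg (norm_nonneg _) (norm_nonneg _)
  rw [projForm, bform_sub_left]
  grw [norm_sub_le, hT.norm_bform_le hW, hT.norm_bform_le hW, hC u, hC' u]
  exact le_of_eq (by ring)

lemma IsDualPairT12.mbc_projForm (hT : IsDualPairT12 T0 T0t lam)
    (hV : (V : Set _) ⊆ Wplus T0 T0t hW) (hW2 : (W2 : Set _) ⊆ Wminus T0 T0t hW) :
    MBC T0 T0t hW (projForm hW h) := by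
  refine ⟨fun u => ?_, fun w => ⟨V.projection W2 h w, W2.projection V h.symm w,
    coe_subset_kerDsubM_projForm hW h (Submodule.projection_apply_mem h w),
    coe_subset_kerDaddM_projForm hW h (Submodule.projection_apply_mem h.symm w),
    (Submodule.projection_add_projection_eq_self h w).symm⟩⟩
  have hre := hT.re_bform_sub_add hW (V.projection W2 h u) (W2.projection V h.symm u)
  rw [Submodule.projection_add_projection_eq_self h u] at hre
  exact (sub_nonneg.mpr ((hW2 (Submodule.projection_apply_mem h.symm u)).trans
    (hV (Submodule.projection_apply_mem h u)))).trans_eq hre.symm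

variable {hW}

lemma VBC.coe_eq_kerDsubM_projForm (hV : VBC T0 T0t hW (V : Set _)) :
    (V : Set _) = kerDsubM T0 T0t hW (projForm hW h) := by
  refine (coe_subset_kerDsubM_projForm hW h).antisymm fun u hu => ?_
  have hq : W2.projection V h.symm u ∈ V := hV.mem_of_bform_eq_zero fun v => by
    have huv := bform_sub_projForm hW h u v
    rw [hu v, sub_self] at huv
    simpa using huv.symm
  have hq₀ : W2.projection V h.symm u = 0 :=
    Submodule.disjoint_def.mp h.disjoint _ hq (Submodule.projection_apply_mem h.symm u)
  exact (Submodule.projection_eq_self_iff h u).mp (by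
    simpa [hq₀] using Submodule.projection_add_projection_eq_self h u)

end ProjectionPairing

section TripleDecomposition

variable {T0 T0t : H →ₗ.[ℂ] H} {lam : ℝ} {hW : T0t.adjoint.domain = T0.adjoint.domain}
  {V W2 : Submodule ℂ T0t.adjoint.domain}

lemma VBC.exists_eq_add_add (hV : VBC T0 T0t hW (V : Set _)) (hT : IsDualPairT12 T0 T0t lam)
    (h : IsCompl V W2) (w : T0t.adjoint.domain) :
    ∃ a ∈ W0set T0 T0t, ∃ b ∈ (V : Set _) ∩ W0perp T0 T0t, ∃ c ∈ (W2 : Set _),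
      w = a + b + c := by
  obtain ⟨v, hv, c, hc, rfl⟩ := Submodule.mem_sup.mp (h.sup_eq_top.ge (Submodule.mem_top (x := w)))
  obtain ⟨a, ha, hva⟩ := hT.exists_sub_mem_W0perp v
  exact ⟨a, ha, v - a, ⟨V.sub_mem hv (hV.W0set_subset hT ha), hva⟩, c, hc, by abel⟩

lemma VBC.eq_zero_of_add_add_eq_zero (hV : VBC T0 T0t hW (V : Set _))
    (hT : IsDualPairT12 T0 T0t lam) (h : Disjoint V W2) {a b c : T0t.adjoint.domain}
    (ha : a ∈ W0set T0 T0t) (hb : b ∈ (V : Set _) ∩ W0perp T0 T0t) (hc : c ∈ W2)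
    (habc : a + b + c = 0) : a = 0 ∧ b = 0 ∧ c = 0 := by
  have hab : a + b ∈ V := V.add_mem (hV.W0set_subset hT ha) hb.1
  have hc₀ : c = 0 := Submodule.disjoint_def.mp h c
    (eq_neg_of_add_eq_zero_right habc ▸ V.neg_mem hab) hc
  have hb' : b = -a := eq_neg_of_add_eq_zero_right (by simpa [hc₀] using habc)
  have hb₀ : b = 0 := eq_zero_of_mem_W0set_of_mem_W0perp
    (hb' ▸ T0.closure.domain.neg_mem ha) hb.2
  exact ⟨neg_eq_zero.mp (hb' ▸ hb₀), hb₀, hc₀⟩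

lemma VBC.bform_sub_eq_projForm (hV : VBC T0 T0t hW (V : Set _)) (hT : IsDualPairT12 T0 T0t lam)
    (h : IsCompl V W2) {a b c : T0t.adjoint.domain} (ha : a ∈ W0set T0 T0t) (hb : b ∈ V)
    (hc : c ∈ W2) (v : T0t.adjoint.domain) :
    bform T0 T0t hW (b - c) v = projForm hW h (a + b + c) v := by
  have hab : a + b ∈ V := V.add_mem (hV.W0set_subset hT ha) hb
  have hp : V.projection W2 h (a + b + c) = a + b := projection_add_eq_left h hab hc
  have hq : W2.projection V h.symm (a + b + c) = c := by
    rw [add_comm (a + b) c]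
    exact projection_add_eq_left h.symm hc hab
  rw [projForm, hp, hq, bform_sub_left, bform_sub_left, bform_add_left,
    hT.bform_eq_zero_of_mem_W0set hW ha, zero_add]

end TripleDecomposition

theorem VBC_exists_W2_and_M_of_triple_decomposition_general
    (T0 T0t : H →ₗ.[ℂ] H) (lam : ℝ) (hT : IsDualPairT12 T0 T0t lam)
    (hW : T0t.adjoint.domain = T0.adjoint.domain)
    (V : Submodule ℂ ↥T0t.adjoint.domain) (hV : VBC T0 T0t hW (V : Set _)) :
    (∃ W2 : Submodule ℂ ↥T0t.adjoint.domain,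
      GClosed T0t (W2 : Set _) ∧ (W2 : Set _) ⊆ Wminus T0 T0t hW ∧
      V ⊓ W2 = ⊥ ∧ V ⊔ W2 = ⊤) ∧
    (∀ W2 : Submodule ℂ ↥T0t.adjoint.domain,
      GClosed T0t (W2 : Set _) → (W2 : Set _) ⊆ Wminus T0 T0t hW →
      V ⊓ W2 = ⊥ → V ⊔ W2 = ⊤ →
      ((∀ w : ↥T0t.adjoint.domain, ∃ a ∈ W0set T0 T0t,
          ∃ b ∈ (V : Set _) ∩ W0perp T0 T0t, ∃ c ∈ (W2 : Set _), w = a + b + c) ∧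
       (∀ a ∈ W0set T0 T0t, ∀ b ∈ (V : Set _) ∩ W0perp T0 T0t, ∀ c ∈ (W2 : Set _),
          a + b + c = 0 → a = 0 ∧ b = 0 ∧ c = 0)) ∧
      (∀ q0 q1 q2 : ↥T0t.adjoint.domain →ₗ[ℂ] ↥T0t.adjoint.domain,
        (∀ u, q0 u ∈ W0set T0 T0t ∧ q1 u ∈ (V : Set _) ∩ W0perp T0 T0t ∧
          q2 u ∈ W2 ∧ q0 u + q1 u + q2 u = u) →
        (∃ C, ∀ u v, ‖bform T0 T0t hW (q1 u - q2 u) v‖ ≤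
            C * (gnorm T0t u * gnorm T0t v)) ∧
        MBC T0 T0t hW (fun u v => bform T0 T0t hW (q1 u - q2 u) v) ∧
        (V : Set _) = kerDsubM T0 T0t hW (fun u v => bform T0 T0t hW (q1 u - q2 u) v))) := by
  refine ⟨⟨(addSMul T0t.adjoint ((lam + 1 : ℝ) : ℂ)).ker, ?_⟩, ?_⟩
  · have h := hV.isCompl_ker_addSMul hT (lt_add_one lam)
    exact ⟨gClosed_ker_addSMul T0t _, hT.ker_addSMul_subset_Wminus hW (lt_add_one lam).le,
      h.inf_eq_bot, h.sup_eq_top⟩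
  · intro W2 hclosed hminus hinf hsup
    have h : IsCompl V W2 := IsCompl.of_eq hinf hsup
    refine ⟨⟨hV.exists_eq_add_add hT h, fun a ha b hb c hc =>
      hV.eq_zero_of_add_add_eq_zero hT h.disjoint ha hb hc⟩, fun q0 q1 q2 hq => ?_⟩
    have hM (u v) : bform T0 T0t hW (q1 u - q2 u) v = projForm hW h u v := by
      obtain ⟨h₀, h₁, h₂, hu⟩ := hq u
      rw [hV.bform_sub_eq_projForm hT h h₀ h₁.1 h₂, hu]
    simp only [hM]
    exact ⟨hT.exists_norm_projForm_le hW h (hV.gClosed hT) hclosed,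
      hT.mbc_projForm hW h hV.1 hminus, hV.coe_eq_kerDsubM_projForm h⟩

/-- Theorem 5.1(i): if `V` satisfies the (V)-boundary conditions, then there is a
closed subspace `W₂ ⊆ W⁻` with `W = V ∔ W₂`; for any such `W₂`, setting
`W₁ := V ∩ W₀^⊥`, one has `W = W₀ ∔ W₁ ∔ W₂`, and for the associated projections
`q₀, q₁, q₂`, the operator `M = D(q₁ − q₂)` belongs to `L(W;W')`, satisfies the
(M)-boundary conditions and `V = ker (D − M)`. -/
theorem VBC_exists_W2_and_M_of_triple_decomposition
    (T0 T0t : H →ₗ.[ℂ] H) (lam mu : ℝ) (hF : IsFriedrichsPair T0 T0t lam mu)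
    (hW : T0t.adjoint.domain = T0.adjoint.domain)
    (V : Submodule ℂ ↥T0t.adjoint.domain) (hV : VBC T0 T0t hW (V : Set _)) :
    (∃ W2 : Submodule ℂ ↥T0t.adjoint.domain,
      GClosed T0t (W2 : Set _) ∧ (W2 : Set _) ⊆ Wminus T0 T0t hW ∧
      V ⊓ W2 = ⊥ ∧ V ⊔ W2 = ⊤) ∧
    (∀ W2 : Submodule ℂ ↥T0t.adjoint.domain,
      GClosed T0t (W2 : Set _) → (W2 : Set _) ⊆ Wminus T0 T0t hW →
      V ⊓ W2 = ⊥ → V ⊔ W2 = ⊤ →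
      ((∀ w : ↥T0t.adjoint.domain, ∃ a ∈ W0set T0 T0t,
          ∃ b ∈ (V : Set _) ∩ W0perp T0 T0t, ∃ c ∈ (W2 : Set _), w = a + b + c) ∧
       (∀ a ∈ W0set T0 T0t, ∀ b ∈ (V : Set _) ∩ W0perp T0 T0t, ∀ c ∈ (W2 : Set _),
          a + b + c = 0 → a = 0 ∧ b = 0 ∧ c = 0)) ∧
      (∀ q0 q1 q2 : ↥T0t.adjoint.domain →ₗ[ℂ] ↥T0t.adjoint.domain,
        (∀ u, q0 u ∈ W0set T0 T0t ∧ q1 u ∈ (V : Set _) ∩ W0perp T0 T0t ∧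
          q2 u ∈ W2 ∧ q0 u + q1 u + q2 u = u) →
        (∃ C, ∀ u v, ‖bform T0 T0t hW (q1 u - q2 u) v‖ ≤
            C * (gnorm T0t u * gnorm T0t v)) ∧
        MBC T0 T0t hW (fun u v => bform T0 T0t hW (q1 u - q2 u) v) ∧
        (V : Set _) = kerDsubM T0 T0t hW (fun u v => bform T0 T0t hW (q1 u - q2 u) v))) := by
  exact VBC_exists_W2_and_M_of_triple_decomposition_general T0 T0t lam hF.toIsDualPairT12 hW V hV
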